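/- Let Γ be a finite extensive-form game with perfect recall. A behavioral strategy profile β* is a Nash equilibrium in behavioral strategies if and only if there exist a behavioral strategy profile β̃* and a belief system μ* such that: (i) β*^i_{I_i^j}(a') = 0 for all i ∈ N, j ∈ M_i and a', a'' ∈ A(I_i^j) with ω(I_i^j|β*) > 0 and u^i(a'', ϱ^i_{I_i^j}(β*^{-I_i^j}, β̃*), μ* | I_i^j) > u^i(a', ϱ^i_{I_i^j}(β*^{-I_i^j}, β̃*), μ* | I_i^j); (ii) β̃*^i_{I_i^j}(a') = 0 for all i, j and a', a'' ∈ A(I_i^j) with u^i(a'', ϱ^i_{I_i^j}(β*^{-I_i^j}, β̃*), μ* | I_i^j) > u^i(a', ϱ^i_{I_i^j}(β*^{-I_i^j}, β̃*), μ* | I_i^j); and (iii) μ* is self-independent for β*. -/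

import Mathlib

open scoped Classical

noncomputable section

/-- A finite extensive-form game.  Actions are labelled by natural numbers drawn from the
finite pool `actFinset`; a history is the list of actions taken so far; players are `Fin n`
and `P h = none` means that the chance player moves after `h`.  The information sets of
player `i` are `Info i j` for `j < m i`, and `infoIdx h` is the index of the information
set containing a nonterminal history `h` at which some player moves.  Payoffs `u i h` are
relevant on terminal histories. -/
structure EFG where
  n : ℕ
  actFinset : Finset ℕ
  H : Finset (List ℕ)
  P : List ℕ → Option (Fin n)
  fc : List ℕ → ℕ → ℝ
  m : Fin n → ℕ
  Info : Fin n → ℕ → Finset (List ℕ)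
  infoIdx : List ℕ → ℕ
  u : Fin n → List ℕ → ℝ
  empty_mem : ([] : List ℕ) ∈ H
  prefixClosed : ∀ h ∈ H, ∀ h' : List ℕ, h' <+: h → h' ∈ H
  act_mem : ∀ (h : List ℕ) (a : ℕ), h ++ [a] ∈ H → a ∈ actFinset
  fc_nonneg : ∀ h a, 0 ≤ fc h a
  fc_sum : ∀ h ∈ H, P h = none → (∃ a, h ++ [a] ∈ H) →
    ∑ a ∈ actFinset.filter (fun a => h ++ [a] ∈ H), fc h a = 1
  info_spec : ∀ (i : Fin n) (j : ℕ) (h : List ℕ), j < m i →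
    (h ∈ Info i j ↔ h ∈ H ∧ P h = some i ∧ (∃ a, h ++ [a] ∈ H) ∧ infoIdx h = j)
  infoIdx_lt : ∀ (i : Fin n), ∀ h ∈ H, P h = some i → (∃ a, h ++ [a] ∈ H) → infoIdx h < m i
  info_nonempty : ∀ (i : Fin n) (j : ℕ), j < m i → (Info i j).Nonempty
  info_actions : ∀ (i : Fin n) (j : ℕ), j < m i → ∀ h ∈ Info i j, ∀ h' ∈ Info i j,
    ∀ a : ℕ, (h ++ [a] ∈ H ↔ h' ++ [a] ∈ H)
  act_unique : ∀ (h h' : List ℕ) (a : ℕ), h ∈ H → h' ∈ H → h ++ [a] ∈ H → h' ++ [a] ∈ H →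
    P h = P h' ∧ infoIdx h = infoIdx h'

namespace EFG

/-- Behavioral strategy profiles (player, information-set index, action ↦ probability). -/
abbrev Profile (G : EFG) : Type := Fin G.n → ℕ → ℕ → ℝ

/-- Belief systems (player, information-set index, history ↦ probability). -/
abbrev Belief (G : EFG) : Type := Fin G.n → ℕ → List ℕ → ℝ

variable (G : EFG)

/-- The set `Z` of terminal histories. -/
def Zset : Finset (List ℕ) := G.H.filter fun h => ∀ a : ℕ, h ++ [a] ∉ G.H

/-- The set `A(h)` of actions available after a history. -/
def A (h : List ℕ) : Finset ℕ := G.actFinset.filter fun a => h ++ [a] ∈ G.H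

/-- The common action set `A(I_i^j)` of an information set. -/
def infoA (i : Fin G.n) (j : ℕ) : Finset ℕ := (G.Info i j).sup fun h => G.A h

/-- A behavioral strategy of player `i`: a probability distribution on `A(I_i^j)` for
each information set `I_i^j`. -/
def IsBehStrategy (i : Fin G.n) (b : ℕ → ℕ → ℝ) : Prop :=
  ∀ j < G.m i, (∀ a ∈ G.infoA i j, 0 ≤ b j a) ∧ ∑ a ∈ G.infoA i j, b j a = 1

/-- A behavioral strategy profile. -/
def IsBehProfile (β : G.Profile) : Prop := ∀ i : Fin G.n, G.IsBehStrategy i (β i)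

/-- The probability of action `a` at history `h`: the chance distribution if the chance
player moves, and the mover's behavioral strategy otherwise. -/
def moveProb (β : G.Profile) (h : List ℕ) (a : ℕ) : ℝ :=
  (G.P h).elim (G.fc h a) fun i => β i (G.infoIdx h) a

/-- Player `i`'s record `X_i` of the information sets he encounters along a history and the
actions he takes at them, accumulated starting from the prefix `pre`. -/
def recordFrom (i : Fin G.n) : List ℕ → List ℕ → List (ℕ × ℕ)
  | _, [] => []
  | pre, b :: rest =>
    (if G.P pre = some i then [(G.infoIdx pre, b)] else []) ++ recordFrom i (pre ++ [b]) rest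

/-- Perfect recall. -/
def PerfectRecall : Prop :=
  ∀ (i : Fin G.n) (j : ℕ), j < G.m i →
    ∀ h ∈ G.Info i j, ∀ h' ∈ G.Info i j, G.recordFrom i [] h = G.recordFrom i [] h'

/-- Product of the move probabilities along `rest`, continuing from the prefix `pre`. -/
def prodAlong (β : G.Profile) : List ℕ → List ℕ → ℝ
  | _, [] => 1
  | pre, b :: rest => G.moveProb β pre b * prodAlong β (pre ++ [b]) rest

/-- `ω(h|β)`: the probability that the moves along `h` are played under `β`. -/
def omega (β : G.Profile) (h : List ℕ) : ℝ := G.prodAlong β [] h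

/-- `ω(I_i^j|β)`. -/
def omegaInfo (i : Fin G.n) (j : ℕ) (β : G.Profile) : ℝ := ∑ h ∈ G.Info i j, G.omega β h

/-- Product of the move probabilities along `rest` from `pre`, disregarding player `i`'s
own moves. -/
def prodAlongNot (i : Fin G.n) (β : G.Profile) : List ℕ → List ℕ → ℝ
  | _, [] => 1
  | pre, b :: rest =>
    (if G.P pre = some i then 1 else G.moveProb β pre b) * prodAlongNot i β (pre ++ [b]) rest

/-- `S^i(h|β)`: probability of the moves along `h`, disregarding player `i`'s own moves. -/
def Sh (i : Fin G.n) (β : G.Profile) (h : List ℕ) : ℝ := G.prodAlongNot i β [] h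

/-- `S^i(I_i^j|β)`. -/
def SInfo (i : Fin G.n) (j : ℕ) (β : G.Profile) : ℝ := ∑ h ∈ G.Info i j, G.Sh i β h

/-- Product of the move probabilities along `rest` from `pre`, with the factor at prefixes
lying in `I_i^j` omitted. -/
def prodAlongSkip (i : Fin G.n) (j : ℕ) (β : G.Profile) : List ℕ → List ℕ → ℝ
  | _, [] => 1
  | pre, b :: rest =>
    (if pre ∈ G.Info i j then 1 else G.moveProb β pre b) * prodAlongSkip i j β (pre ++ [b]) rest

/-- `q ∈ M(a, I_i^j)`: `I_i^q` is a first information set of player `i` after action `a`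
(every history in `I_i^q` contains `a`, with no later action of `a` lying in any action set
of player `i`). -/
def FirstAfter (i : Fin G.n) (a : ℕ) (q : ℕ) : Prop :=
  q < G.m i ∧ ∀ h ∈ G.Info i q, ∃ l₁ l₂ : List ℕ,
    h = l₁ ++ a :: l₂ ∧ ∀ b ∈ l₂, ∀ p < G.m i, b ∉ G.infoA i p

/-- `q ∈ M(I_i^j) = ∪_{a ∈ A(I_i^j)} M(a, I_i^j)`. -/
def MInfo (i : Fin G.n) (j : ℕ) (q : ℕ) : Prop := ∃ a ∈ G.infoA i j, G.FirstAfter i a q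

/-- `q ∈ Λ(a, I_i^j)`: every history in `I_i^q` contains the action `a`. -/
def LambdaSet (i : Fin G.n) (a : ℕ) (q : ℕ) : Prop :=
  q < G.m i ∧ ∀ h ∈ G.Info i q, ∃ l₁ l₂ : List ℕ, h = l₁ ++ a :: l₂

/-- `ϱ^i_{I_i^j}(β, β̃)`: replace player `i`'s component of `β` by that of `β̃` at every
information set `I_i^q` such that some history in `I_i^q` contains an action of `A(I_i^j)`. -/
def rho (i : Fin G.n) (j : ℕ) (β βt : G.Profile) : G.Profile := fun p q =>
  if p = i ∧ ∃ h ∈ G.Info i q, ∃ b ∈ h, b ∈ G.infoA i j then βt i q else β p q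

/-- A belief system: a probability distribution on each information set. -/
def IsBelief (μ : G.Belief) : Prop :=
  ∀ (i : Fin G.n) (j : ℕ), j < G.m i →
    (∀ h ∈ G.Info i j, 0 ≤ μ i j h) ∧ ∑ h ∈ G.Info i j, μ i j h = 1

/-- A self-independent belief system for `β`:
`S^i(I_i^j|β) · μ^i_{I_i^j}(h) = S^i(h|β)`. -/
def SelfIndep (β : G.Profile) (μ : G.Belief) : Prop :=
  ∀ (i : Fin G.n) (j : ℕ), j < G.m i → ∀ h ∈ G.Info i j,
    G.SInfo i j β * μ i j h = G.Sh i β h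

/-- Auxiliary for `ν`: scan `rest` from `pre` for the subhistory lying in `I_i^j`, then
weight by the belief and multiply the move probabilities of the remaining moves (the move
taken at the subhistory itself being skipped). -/
def nuAux (i : Fin G.n) (j : ℕ) (β : G.Profile) (w : List ℕ → ℝ) : List ℕ → List ℕ → ℝ
  | _, [] => 0
  | pre, b :: rest =>
    if pre ∈ G.Info i j then w pre * G.prodAlong β (pre ++ [b]) rest
    else nuAux i j β w (pre ++ [b]) rest

/-- `ν^i_{I_i^j}(h | a, β^{-I_i^j}, μ)` (it does not involve the component of `β` at
`I_i^j`). -/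
def nu (i : Fin G.n) (j : ℕ) (β : G.Profile) (μ : G.Belief) (h : List ℕ) : ℝ :=
  G.nuAux i j β (μ i j) [] h

/-- `u^i((a, β^{-I_i^j}) ∧ I_i^j)`. -/
def uWedgeAct (i : Fin G.n) (j : ℕ) (a : ℕ) (β : G.Profile) : ℝ :=
  ∑ h ∈ G.Zset.filter (fun h => a ∈ h), G.u i h * G.prodAlongSkip i j β [] h

/-- `u^i(β ∧ I_i^j)`. -/
def uWedge (i : Fin G.n) (j : ℕ) (β : G.Profile) : ℝ :=
  ∑ h ∈ G.Zset.filter (fun h => ∃ b ∈ h, b ∈ G.infoA i j), G.u i h * G.omega β h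

/-- The conditional expected payoff `u^i(a, β^{-I_i^j}, μ | I_i^j)`. -/
def uCond (i : Fin G.n) (j : ℕ) (a : ℕ) (β : G.Profile) (μ : G.Belief) : ℝ :=
  ∑ h ∈ G.Zset.filter (fun h => a ∈ h), G.u i h * G.nu i j β μ h

/-- The expected payoff `u^i(β)`. -/
def uExp (i : Fin G.n) (β : G.Profile) : ℝ := ∑ h ∈ G.Zset, G.u i h * G.omega β h

/-- The profile obtained from `β` by replacing all of player `i`'s components by `b`. -/
def replace (β : G.Profile) (i : Fin G.n) (b : ℕ → ℕ → ℝ) : G.Profile :=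
  fun p => if p = i then b else β p

/-- `β` is a Nash equilibrium in behavioral strategies. -/
def IsNash (β : G.Profile) : Prop :=
  G.IsBehProfile β ∧ ∀ (i : Fin G.n) (b : ℕ → ℕ → ℝ), G.IsBehStrategy i b →
    G.uExp i (G.replace β i b) ≤ G.uExp i β

/-- `(β, β̃, μ)` satisfies the Nash characterization (Definition 2 of the paper). -/
def NashChar (β βt : G.Profile) (μ : G.Belief) : Prop :=
  (∀ (i : Fin G.n) (j : ℕ), j < G.m i → ∀ a' ∈ G.infoA i j, ∀ a'' ∈ G.infoA i j,
    G.uWedgeAct i j a' (G.rho i j β βt) < G.uWedgeAct i j a'' (G.rho i j β βt) →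
    β i j a' = 0) ∧
  (∀ (i : Fin G.n) (j : ℕ), j < G.m i → ∀ a' ∈ G.infoA i j, ∀ a'' ∈ G.infoA i j,
    G.uCond i j a' (G.rho i j β βt) μ < G.uCond i j a'' (G.rho i j β βt) μ →
    βt i j a' = 0) ∧
  G.IsBelief μ ∧ G.SelfIndep β μ

/-- `r` is the root of a subgame: every information set lies entirely inside or entirely
outside the set of histories extending `r`. -/
def IsSubgameRoot (r : List ℕ) : Prop :=
  r ∈ G.H ∧ ∀ (i : Fin G.n) (j : ℕ), j < G.m i →
    (∀ h ∈ G.Info i j, r <+: h) ∨ ∀ h ∈ G.Info i j, ¬ r <+: h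

/-- The depth `g` of the smallest subgame containing `A(I_i^j)` (the length of the longest
subgame root preceding every history of `I_i^j`). -/
def sgDepthInfo (i : Fin G.n) (j : ℕ) : ℕ :=
  (G.H.filter fun r => G.IsSubgameRoot r ∧ ∀ h ∈ G.Info i j, r <+: h).sup List.length

/-- The depth `q(h)` of the smallest subgame containing the last action of `h`. -/
def sgDepthHist (h : List ℕ) : ℕ :=
  (G.H.filter fun r => G.IsSubgameRoot r ∧ r <+: h.dropLast).sup List.length

/-- `C^i_{I_i^j}(h|β)`: product of move probabilities along `h` within the smallest subgame
containing `A(I_i^j)`. -/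
def Ch (i : Fin G.n) (j : ℕ) (β : G.Profile) (h : List ℕ) : ℝ :=
  G.prodAlong β (h.take (G.sgDepthInfo i j)) (h.drop (G.sgDepthInfo i j))

/-- `C^i_{I_i^j}(I_i^j|β)`. -/
def CInfo (i : Fin G.n) (j : ℕ) (β : G.Profile) : ℝ := ∑ h ∈ G.Info i j, G.Ch i j β h

/-- `u^i((a, β^{-I_i^j}) ⋄ I_i^j)`. -/
def uDiamondAct (i : Fin G.n) (j : ℕ) (a : ℕ) (β : G.Profile) : ℝ :=
  ∑ h ∈ G.Zset.filter (fun h => a ∈ h), G.u i h *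
    G.prodAlongSkip i j β (h.take (G.sgDepthInfo i j)) (h.drop (G.sgDepthInfo i j))

/-- `Y^i(h|β)`: like `S^i(h|β)` but within the smallest subgame containing the last action
of `h`. -/
def Yh (i : Fin G.n) (β : G.Profile) (h : List ℕ) : ℝ :=
  G.prodAlongNot i β (h.take (G.sgDepthHist h)) (h.drop (G.sgDepthHist h))

/-- `Y^i(I_i^j|β)`. -/
def YInfo (i : Fin G.n) (j : ℕ) (β : G.Profile) : ℝ := ∑ h ∈ G.Info i j, G.Yh i β h

/-- The belief condition `Y^i(I_i^j|β) · μ^i_{I_i^j}(h) = Y^i(h|β)`. -/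
def YConsistent (β : G.Profile) (μ : G.Belief) : Prop :=
  ∀ (i : Fin G.n) (j : ℕ), j < G.m i → ∀ h ∈ G.Info i j,
    G.YInfo i j β * μ i j h = G.Yh i β h

/-- The expected payoff of player `i` in the subgame rooted at `r` (payoffs of terminal
histories extending `r`, weighted by the move probabilities within the subgame). -/
def uExpFrom (i : Fin G.n) (β : G.Profile) (r : List ℕ) : ℝ :=
  ∑ h ∈ G.Zset.filter (fun h => r <+: h), G.u i h * G.prodAlong β r (h.drop r.length)

/-- `β` is a subgame perfect equilibrium in behavioral strategies: its restriction to every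
subgame is a Nash equilibrium in behavioral strategies of that subgame. -/
def IsSubgamePerfect (β : G.Profile) : Prop :=
  G.IsBehProfile β ∧ ∀ r : List ℕ, G.IsSubgameRoot r →
    ∀ (i : Fin G.n) (b : ℕ → ℕ → ℝ), G.IsBehStrategy i b →
      G.uExpFrom i (G.replace β i b) r ≤ G.uExpFrom i β r

/-- `(β, β̃, μ)` satisfies the subgame perfect characterization (Definition 6 of the
paper). -/
def SubgameChar (β βt : G.Profile) (μ : G.Belief) : Prop :=
  (∀ (i : Fin G.n) (j : ℕ), j < G.m i → ∀ a' ∈ G.infoA i j, ∀ a'' ∈ G.infoA i j,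
    G.uDiamondAct i j a' (G.rho i j β βt) < G.uDiamondAct i j a'' (G.rho i j β βt) →
    β i j a' = 0) ∧
  (∀ (i : Fin G.n) (j : ℕ), j < G.m i → ∀ a' ∈ G.infoA i j, ∀ a'' ∈ G.infoA i j,
    G.uCond i j a' (G.rho i j β βt) μ < G.uCond i j a'' (G.rho i j β βt) μ →
    βt i j a' = 0) ∧
  G.IsBelief μ ∧ G.YConsistent β μ

/-- `(β, μ)` is a semi-sequential equilibrium. -/
def SemiSeqEq (β : G.Profile) (μ : G.Belief) : Prop :=
  G.IsBehProfile β ∧ G.IsBelief μ ∧ G.SelfIndep β μ ∧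
  ∀ (i : Fin G.n) (j : ℕ), j < G.m i → ∀ a' ∈ G.infoA i j, ∀ a'' ∈ G.infoA i j,
    G.uCond i j a' β μ < G.uCond i j a'' β μ → β i j a' = 0

/-- `(β, μ)` is a subgame perfect semi-sequential equilibrium. -/
def SubgameSemiSeqEq (β : G.Profile) (μ : G.Belief) : Prop :=
  G.IsBehProfile β ∧ G.IsBelief μ ∧ G.YConsistent β μ ∧
  ∀ (i : Fin G.n) (j : ℕ), j < G.m i → ∀ a' ∈ G.infoA i j, ∀ a'' ∈ G.infoA i j,
    G.uCond i j a' β μ < G.uCond i j a'' β μ → β i j a' = 0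

/-- `d(I_i^j)`: the number of information sets of player `i` containing a prefix of some
history of `I_i^j` (counting `I_i^j` itself). -/
def dInfo (i : Fin G.n) (j : ℕ) : ℕ :=
  ((Finset.range (G.m i)).filter
    (fun q => ∃ h ∈ G.Info i j, ∃ p : List ℕ, p <+: h ∧ p ∈ G.Info i q)).card

end EFG

/-!
Fix a player `i`, the strategies of the opponents and self-independent beliefs `μ`.  Because of
perfect recall, player `i`'s own moves cancel in the conditional probabilities of the histories of
an information set, so Bayes' rule `ω(h) = ω(I_i^j) μ(h)` holds whatever player `i` plays.  If `γ`
and `γ'` differ only in player `i`'s strategy, replacing the moves of `γ` by those of `γ'` one at a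
time along each path therefore gives
`u^i(γ') - u^i(γ) = ∑_j ω(I_i^j|γ') ∑_a (γ'_j(a) - γ_j(a)) u^i(a, γ, μ | I_i^j)`.
If `γ` is optimal at every information set, as backward induction can achieve, all summands are
nonpositive.  So `γ` is a global best reply, and `γ'` is one exactly when the summands vanish, which
means that `γ'` plays optimally against the continuation `γ` wherever `ω(I_i^j|γ') > 0`.
-/

section Weights

variable {ι : Type*} {s : Finset ι} {f p : ι → ℝ}

/-- The weights `p` are concentrated on the maximisers of `f` over `s`: the local optimality
condition satisfied by a best reply at an information set with action set `s`. -/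
def IsOptimalOn (s : Finset ι) (f p : ι → ℝ) : Prop :=
  ∀ a' ∈ s, ∀ a'' ∈ s, f a' < f a'' → p a' = 0

lemma isOptimalOn_congr {g : ι → ℝ} (hfg : ∀ a ∈ s, f a = g a) :
    IsOptimalOn s f p ↔ IsOptimalOn s g p :=
  forall₂_congr fun a' ha' => forall₂_congr fun a'' ha'' => by rw [hfg a' ha', hfg a'' ha'']

lemma isOptimalOn_iff_lt_sup' (hs : s.Nonempty) :
    IsOptimalOn s f p ↔ ∀ a ∈ s, f a < s.sup' hs f → p a = 0 := by
  simp only [IsOptimalOn, Finset.lt_sup'_iff, forall_exists_index, and_imp]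

lemma sup'_sub_sum_mul_eq (hs : s.Nonempty) (hp1 : ∑ a ∈ s, p a = 1) :
    s.sup' hs f - ∑ a ∈ s, p a * f a = ∑ a ∈ s, p a * (s.sup' hs f - f a) := by
  simp only [mul_sub, Finset.sum_sub_distrib, ← Finset.sum_mul, hp1, one_mul]

lemma mul_sup'_sub_nonneg (hs : s.Nonempty) (hp0 : ∀ a ∈ s, 0 ≤ p a) :
    ∀ a ∈ s, 0 ≤ p a * (s.sup' hs f - f a) :=
  fun a ha => mul_nonneg (hp0 a ha) (sub_nonneg.2 (s.le_sup' f ha))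

lemma sum_mul_le_sup' (hs : s.Nonempty) (hp0 : ∀ a ∈ s, 0 ≤ p a) (hp1 : ∑ a ∈ s, p a = 1) :
    ∑ a ∈ s, p a * f a ≤ s.sup' hs f := by
  rw [← sub_nonneg, sup'_sub_sum_mul_eq hs hp1]
  exact Finset.sum_nonneg (mul_sup'_sub_nonneg hs hp0)

lemma sum_mul_eq_sup'_iff (hs : s.Nonempty) (hp0 : ∀ a ∈ s, 0 ≤ p a) (hp1 : ∑ a ∈ s, p a = 1) :
    ∑ a ∈ s, p a * f a = s.sup' hs f ↔ IsOptimalOn s f p := by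
  rw [eq_comm, ← sub_eq_zero, sup'_sub_sum_mul_eq hs hp1,
    Finset.sum_eq_zero_iff_of_nonneg (mul_sup'_sub_nonneg hs hp0), isOptimalOn_iff_lt_sup' hs]
  refine forall₂_congr fun a ha => ?_
  rw [mul_eq_zero, sub_eq_zero, (s.le_sup' f ha).lt_iff_ne, or_iff_not_imp_right, ne_comm]

lemma exists_weights_isOptimalOn (hs : s.Nonempty) (f : ι → ℝ) :
    ∃ p : ι → ℝ, ((∀ a ∈ s, 0 ≤ p a) ∧ ∑ a ∈ s, p a = 1) ∧ IsOptimalOn s f p := by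
  obtain ⟨a₀, ha₀, hmax⟩ := s.exists_max_image f hs
  refine ⟨Pi.single a₀ 1, ⟨fun a _ => ?_, ?_⟩, ?_⟩
  · exact (Pi.single_nonneg (α := fun _ => ℝ)).2 zero_le_one a
  · rw [Finset.sum_pi_single', if_pos ha₀]
  · intro a' _ a'' ha'' hlt
    have hne : a' ≠ a₀ := by
      rintro rfl
      exact (hmax a'' ha'').not_gt hlt
    exact Pi.single_eq_of_ne hne 1

lemma exists_weights_sum_mul_eq (hs : s.Nonempty) (hf : ∀ a ∈ s, 0 ≤ f a) :
    ∃ p : ι → ℝ, ((∀ a ∈ s, 0 ≤ p a) ∧ ∑ a ∈ s, p a = 1) ∧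
      ∀ a ∈ s, (∑ a ∈ s, f a) * p a = f a := by
  by_cases h0 : ∑ a ∈ s, f a = 0
  · obtain ⟨p, hp, -⟩ := exists_weights_isOptimalOn hs f
    refine ⟨p, hp, fun a ha => ?_⟩
    rw [h0, zero_mul, (Finset.sum_eq_zero_iff_of_nonneg hf).1 h0 a ha]
  · refine ⟨fun a => f a / ∑ a ∈ s, f a,
      ⟨fun a ha => div_nonneg (hf a ha) (Finset.sum_nonneg hf), ?_⟩,
      fun a _ => mul_div_cancel₀ _ h0⟩
    rw [← Finset.sum_div, div_self h0]

end Weights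

theorem exists_forall_apply_of_wellFounded {ι α : Type*} [Nonempty α] {r : ι → ι → Prop}
    (hr : WellFounded r) {R : ι → (ι → α) → α → Prop} (hex : ∀ j b, ∃ x, R j b x)
    (hloc : ∀ j b b' x, (∀ q, r q j → b q = b' q) → R j b x → R j b' x) :
    ∃ b : ι → α, ∀ j, R j b (b j) := by
  choose g hg using hex
  let restrict (j : ι) (c : ∀ q, r q j → α) (q : ι) : α :=
    if h : r q j then c q h else Classical.arbitrary α
  refine ⟨hr.fix fun j c => g j (restrict j c), fun j => ?_⟩
  rw [hr.fix_eq]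
  exact hloc j _ _ _ (fun q hq => dif_pos hq) (hg j _)

namespace EFG

variable {G : EFG} {i : Fin G.n} {j : ℕ} {a b : ℕ} {h l r pre : List ℕ} {β γ γ' : G.Profile}
  {μ : G.Belief}

section Histories

lemma mem_H_of_append_mem (hH : l ++ r ∈ G.H) : l ∈ G.H :=
  G.prefixClosed _ hH _ (List.prefix_append l r)

lemma append_singleton_mem_H (hH : l ++ b :: r ∈ G.H) : l ++ [b] ∈ G.H :=
  mem_H_of_append_mem (r := r) (by rwa [List.append_assoc, List.singleton_append])

lemma mem_H_of_mem_Info (hj : j < G.m i) (hh : h ∈ G.Info i j) : h ∈ G.H :=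
  ((G.info_spec i j h hj).1 hh).1

lemma P_eq_of_mem_Info (hj : j < G.m i) (hh : h ∈ G.Info i j) : G.P h = some i :=
  ((G.info_spec i j h hj).1 hh).2.1

lemma infoIdx_eq_of_mem_Info (hj : j < G.m i) (hh : h ∈ G.Info i j) : G.infoIdx h = j :=
  ((G.info_spec i j h hj).1 hh).2.2.2

lemma infoIdx_lt_of_P_eq (hH : h ++ [b] ∈ G.H) (hP : G.P h = some i) : G.infoIdx h < G.m i :=
  G.infoIdx_lt i h (mem_H_of_append_mem hH) hP ⟨b, hH⟩

lemma mem_Info_infoIdx (hH : h ++ [b] ∈ G.H) (hP : G.P h = some i) :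
    h ∈ G.Info i (G.infoIdx h) :=
  (G.info_spec i _ h (infoIdx_lt_of_P_eq hH hP)).2 ⟨mem_H_of_append_mem hH, hP, ⟨b, hH⟩, rfl⟩

lemma mem_infoA_iff_exists : a ∈ G.infoA i j ↔ ∃ h ∈ G.Info i j, h ++ [a] ∈ G.H := by
  simp only [infoA, A, Finset.mem_sup, Finset.mem_filter]
  exact exists_congr fun h => and_congr_right fun _ => and_iff_right_of_imp (G.act_mem h a)

lemma infoA_nonempty (hj : j < G.m i) : (G.infoA i j).Nonempty := by
  obtain ⟨h, hh⟩ := G.info_nonempty i j hj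
  obtain ⟨a, ha⟩ := ((G.info_spec i j h hj).1 hh).2.2.1
  exact ⟨a, mem_infoA_iff_exists.2 ⟨h, hh, ha⟩⟩

lemma mem_infoA_iff_mem_Info (hj : j < G.m i) (hH : h ++ [b] ∈ G.H) :
    b ∈ G.infoA i j ↔ h ∈ G.Info i j := by
  refine ⟨fun hb => ?_, fun hh => mem_infoA_iff_exists.2 ⟨h, hh, hH⟩⟩
  obtain ⟨h', hh', hH'⟩ := mem_infoA_iff_exists.1 hb
  obtain ⟨hP, hidx⟩ :=
    G.act_unique h h' b (mem_H_of_append_mem hH) (mem_H_of_append_mem hH') hH hH'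
  rw [P_eq_of_mem_Info hj hh'] at hP
  rw [← infoIdx_eq_of_mem_Info hj hh', ← hidx]
  exact mem_Info_infoIdx hH hP

lemma mem_infoA_infoIdx (hH : h ++ [b] ∈ G.H) (hP : G.P h = some i) :
    b ∈ G.infoA i (G.infoIdx h) :=
  (mem_infoA_iff_mem_Info (infoIdx_lt_of_P_eq hH hP) hH).2 (mem_Info_infoIdx hH hP)

end Histories

section Records

lemma recordFrom_append (i : Fin G.n) (pre r s : List ℕ) :
    G.recordFrom i pre (r ++ s) = G.recordFrom i pre r ++ G.recordFrom i (pre ++ r) s := by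
  induction r generalizing pre with
  | nil => simp [recordFrom]
  | cons b r ih => simp [recordFrom, ih]

lemma recordFrom_cons_of_eq (hP : G.P pre = some i) :
    G.recordFrom i pre (b :: r) = (G.infoIdx pre, b) :: G.recordFrom i (pre ++ [b]) r := by
  simp [recordFrom, hP]

lemma recordFrom_cons_of_ne (hP : G.P pre ≠ some i) :
    G.recordFrom i pre (b :: r) = G.recordFrom i (pre ++ [b]) r := by
  simp [recordFrom, hP]

lemma length_recordFrom_lt (hP : G.P l = some i) :
    (G.recordFrom i [] l).length < (G.recordFrom i [] (l ++ b :: r)).length := by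
  simp [recordFrom_append, recordFrom_cons_of_eq hP]

lemma PerfectRecall.append_cons_notMem_Info (hPR : G.PerfectRecall) (hj : j < G.m i)
    (hl : l ∈ G.Info i j) : l ++ b :: r ∉ G.Info i j := fun hr =>
  (length_recordFrom_lt (P_eq_of_mem_Info hj hl)).ne (congrArg _ (hPR i j hj _ hl _ hr))

lemma mem_recordFrom_iff (hH : pre ++ r ∈ G.H) :
    (j, a) ∈ G.recordFrom i pre r ↔ j < G.m i ∧ a ∈ G.infoA i j ∧ a ∈ r := by
  induction r generalizing pre with
  | nil => simp [recordFrom]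
  | cons b r ih =>
    have hb := append_singleton_mem_H hH
    have ih := ih (pre := pre ++ [b]) (by simpa using hH)
    by_cases hP : G.P pre = some i
    · have hhead : (j, a) = (G.infoIdx pre, b) ↔ j < G.m i ∧ a ∈ G.infoA i j ∧ a = b := by
        rw [Prod.mk.injEq]
        constructor
        · rintro ⟨rfl, rfl⟩
          exact ⟨infoIdx_lt_of_P_eq hb hP, mem_infoA_infoIdx hb hP, rfl⟩
        · rintro ⟨hj, ha, rfl⟩
          exact ⟨(infoIdx_eq_of_mem_Info hj ((mem_infoA_iff_mem_Info hj hb).1 ha)).symm, rfl⟩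
      rw [recordFrom_cons_of_eq hP, List.mem_cons, List.mem_cons, ih, hhead]
      tauto
    · have hne : j < G.m i → a ∈ G.infoA i j → a ≠ b := by
        rintro hj ha rfl
        exact hP (P_eq_of_mem_Info hj ((mem_infoA_iff_mem_Info hj hb).1 ha))
      rw [recordFrom_cons_of_ne hP, List.mem_cons, ih]
      tauto

lemma PerfectRecall.notMem_of_mem_Info (hPR : G.PerfectRecall) (hj : j < G.m i)
    (hl : l ∈ G.Info i j) (hH : l ++ b :: r ∈ G.H) : b ∉ r := by
  intro hbr
  obtain ⟨r₁, r₂, rfl⟩ := List.append_of_mem hbr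
  have hb := (mem_infoA_iff_mem_Info hj (append_singleton_mem_H hH)).2 hl
  have hH' : (l ++ b :: r₁) ++ b :: r₂ ∈ G.H := by simpa using hH
  exact hPR.append_cons_notMem_Info hj hl
    ((mem_infoA_iff_mem_Info hj (append_singleton_mem_H hH')).1 hb)

lemma PerfectRecall.nodup_recordFrom (hPR : G.PerfectRecall) (i : Fin G.n)
    (hH : pre ++ r ∈ G.H) : (G.recordFrom i pre r).Nodup := by
  induction r generalizing pre with
  | nil => simp [recordFrom]
  | cons b r ih =>
    have hb := append_singleton_mem_H hH
    have hH' : (pre ++ [b]) ++ r ∈ G.H := by simpa using hH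
    by_cases hP : G.P pre = some i
    · rw [recordFrom_cons_of_eq hP, List.nodup_cons]
      refine ⟨fun hmem => ?_, ih hH'⟩
      exact hPR.notMem_of_mem_Info (infoIdx_lt_of_P_eq hb hP) (mem_Info_infoIdx hb hP) hH
        ((mem_recordFrom_iff hH').1 hmem).2.2
    · rw [recordFrom_cons_of_ne hP]
      exact ih hH'

lemma PerfectRecall.sum_map_recordFrom (hPR : G.PerfectRecall) (i : Fin G.n) (hH : h ∈ G.H)
    (f : ℕ → ℕ → ℝ) :
    ((G.recordFrom i [] h).map fun p => f p.1 p.2).sum =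
      ∑ j ∈ Finset.range (G.m i), ∑ a ∈ (G.infoA i j).filter (· ∈ h), f j a := by
  rw [← List.sum_toFinset _ (hPR.nodup_recordFrom (pre := []) i hH)]
  refine Finset.sum_finset_product' _ _ _ fun p => ?_
  rw [List.mem_toFinset, Finset.mem_range, Finset.mem_filter]
  exact mem_recordFrom_iff (pre := []) hH

end Records

section Precedence

/-- `I_i^q` comes after `I_i^j`: some history of `I_i^q` contains an action of `A(I_i^j)`.  These
are the information sets at which `rho i j` replaces player `i`'s strategy. -/
def Follows (i : Fin G.n) (j q : ℕ) : Prop :=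
  j < G.m i ∧ q < G.m i ∧ ∃ h ∈ G.Info i q, ∃ b ∈ h, b ∈ G.infoA i j

/-- The number of player `i`'s own moves before `I_i^j`; under perfect recall it is the same for
all histories of the information set. -/
def depth (i : Fin G.n) (j : ℕ) : ℕ :=
  (G.Info i j).sup fun h => (G.recordFrom i [] h).length

lemma PerfectRecall.depth_eq (hPR : G.PerfectRecall) (hj : j < G.m i) (hh : h ∈ G.Info i j) :
    depth i j = (G.recordFrom i [] h).length :=
  le_antisymm (Finset.sup_le fun h' hh' => (congrArg _ (hPR i j hj h' hh' h hh)).le)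
    (Finset.le_sup (f := fun h => (G.recordFrom i [] h).length) hh)

lemma Follows.depth_lt (hPR : G.PerfectRecall) {q : ℕ} (hjq : Follows i j q) :
    depth i j < depth i q := by
  obtain ⟨hj, hq, h, hh, b, hbh, hb⟩ := hjq
  obtain ⟨l, r, rfl⟩ := List.append_of_mem hbh
  have hl : l ∈ G.Info i j := (mem_infoA_iff_mem_Info hj
    (append_singleton_mem_H (mem_H_of_mem_Info hq hh))).1 hb
  rw [hPR.depth_eq hj hl, hPR.depth_eq hq hh]
  exact length_recordFrom_lt (P_eq_of_mem_Info hj hl)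

lemma PerfectRecall.wellFounded_flip_follows (hPR : G.PerfectRecall) (i : Fin G.n) :
    WellFounded (flip (Follows i)) := by
  set K := (Finset.range (G.m i)).sup (depth i)
  refine Subrelation.wf (fun {q j} hjq => ?_) (measure fun j => K - depth i j).wf
  have hlt : depth i j < depth i q := Follows.depth_lt hPR hjq
  exact Nat.sub_lt_sub_left (hlt.trans_le (Finset.le_sup (Finset.mem_range.2 hjq.2.1))) hlt

end Precedence

section PathProbabilities

lemma replace_apply_self (β : G.Profile) (i : Fin G.n) (b : ℕ → ℕ → ℝ) : G.replace β i b i = b :=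
  if_pos rfl

lemma replace_apply_of_ne (β : G.Profile) (b : ℕ → ℕ → ℝ) {p : Fin G.n} (hp : p ≠ i) :
    G.replace β i b p = β p :=
  if_neg hp

lemma IsBehProfile.replace (hβ : G.IsBehProfile β) {b : ℕ → ℕ → ℝ} (hb : G.IsBehStrategy i b) :
    G.IsBehProfile (G.replace β i b) := by
  intro p
  by_cases hp : p = i
  · subst hp
    rwa [replace_apply_self]
  · rw [replace_apply_of_ne β b hp]
    exact hβ p

lemma moveProb_of_P_eq (γ : G.Profile) (hP : G.P h = some i) :
    G.moveProb γ h a = γ i (G.infoIdx h) a := by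
  simp [moveProb, hP]

lemma moveProb_congr (hγ : ∀ p, G.P h = some p → γ p (G.infoIdx h) = γ' p (G.infoIdx h)) :
    G.moveProb γ h a = G.moveProb γ' h a := by
  rcases hP : G.P h with _ | p
  · simp [moveProb, hP]
  · rw [moveProb_of_P_eq γ hP, moveProb_of_P_eq γ' hP, hγ p hP]

lemma moveProb_congr_of_P_ne (hγ : ∀ p, p ≠ i → γ p = γ' p) (hP : G.P h ≠ some i) :
    G.moveProb γ h a = G.moveProb γ' h a :=
  moveProb_congr fun p hp => by rw [hγ p fun hpi => hP (hpi ▸ hp)]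

lemma IsBehProfile.moveProb_nonneg (hγ : G.IsBehProfile γ) (hH : h ++ [a] ∈ G.H) :
    0 ≤ G.moveProb γ h a := by
  rcases hP : G.P h with _ | p
  · simpa [moveProb, hP] using G.fc_nonneg h a
  · rw [moveProb_of_P_eq γ hP]
    exact (hγ p _ (infoIdx_lt_of_P_eq hH hP)).1 a (mem_infoA_infoIdx hH hP)

lemma IsBehProfile.prodAlong_nonneg (hγ : G.IsBehProfile γ) (hH : pre ++ r ∈ G.H) :
    0 ≤ G.prodAlong γ pre r := by
  induction r generalizing pre with
  | nil => exact zero_le_one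
  | cons b r ih =>
    exact mul_nonneg (hγ.moveProb_nonneg (append_singleton_mem_H hH)) (ih (by simpa using hH))

lemma IsBehProfile.prodAlongNot_nonneg (hγ : G.IsBehProfile γ) (hH : pre ++ r ∈ G.H) :
    0 ≤ G.prodAlongNot i γ pre r := by
  induction r generalizing pre with
  | nil => exact zero_le_one
  | cons b r ih =>
    refine mul_nonneg ?_ (ih (by simpa using hH))
    split_ifs
    · exact zero_le_one
    · exact hγ.moveProb_nonneg (append_singleton_mem_H hH)

lemma IsBehProfile.omegaInfo_nonneg (hγ : G.IsBehProfile γ) (hj : j < G.m i) :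
    0 ≤ G.omegaInfo i j γ :=
  Finset.sum_nonneg fun _ hh => hγ.prodAlong_nonneg (pre := []) (mem_H_of_mem_Info hj hh)

lemma prodAlong_append (γ : G.Profile) (pre r s : List ℕ) :
    G.prodAlong γ pre (r ++ s) = G.prodAlong γ pre r * G.prodAlong γ (pre ++ r) s := by
  induction r generalizing pre with
  | nil => simp [prodAlong]
  | cons b r ih => simp [prodAlong, ih, mul_assoc]

lemma omega_append_singleton (γ : G.Profile) (h : List ℕ) (a : ℕ) :
    G.omega γ (h ++ [a]) = G.omega γ h * G.moveProb γ h a := by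
  simp [omega, prodAlong_append, prodAlong]

lemma Sh_congr (hγ : ∀ p, p ≠ i → γ p = γ' p) (h : List ℕ) : G.Sh i γ h = G.Sh i γ' h := by
  suffices ∀ pre, G.prodAlongNot i γ pre h = G.prodAlongNot i γ' pre h from this []
  induction h with
  | nil => exact fun _ => rfl
  | cons b r ih =>
    intro pre
    rw [prodAlongNot, prodAlongNot, ih]
    congr 1
    exact ite_congr rfl (fun _ => rfl) fun hP => moveProb_congr_of_P_ne hγ hP

end PathProbabilities

section BayesRule

/-- Player `i`'s beliefs obey Bayes' rule under `γ`.  The rule is stated without division, so that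
it is vacuous at information sets of probability `0`. -/
def IsBayesAt (i : Fin G.n) (γ : G.Profile) (μ : G.Belief) : Prop :=
  ∀ j < G.m i, ∀ h ∈ G.Info i j, G.omega γ h = G.omegaInfo i j γ * μ i j h

/-- The probability with which the strategy `b` takes all the actions of a record of a player,
that is, the player's own contribution to `ω`. -/
def realizationWeight (b : ℕ → ℕ → ℝ) (l : List (ℕ × ℕ)) : ℝ :=
  (l.map fun p => b p.1 p.2).prod

lemma omega_eq_realizationWeight_mul_Sh (i : Fin G.n) (γ : G.Profile) (h : List ℕ) :
    G.omega γ h = realizationWeight (γ i) (G.recordFrom i [] h) * G.Sh i γ h := by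
  suffices ∀ pre, G.prodAlong γ pre h =
    realizationWeight (γ i) (G.recordFrom i pre h) * G.prodAlongNot i γ pre h from this []
  induction h with
  | nil => simp [prodAlong, recordFrom, prodAlongNot, realizationWeight]
  | cons b r ih =>
    intro pre
    rw [prodAlong, prodAlongNot, ih]
    by_cases hP : G.P pre = some i
    · rw [recordFrom_cons_of_eq hP, moveProb_of_P_eq γ hP, if_pos hP, realizationWeight,
        realizationWeight, List.map_cons, List.prod_cons]
      ring
    · rw [recordFrom_cons_of_ne hP, if_neg hP]
      ring

lemma PerfectRecall.omegaInfo_eq (hPR : G.PerfectRecall) (hj : j < G.m i)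
    (hh : h ∈ G.Info i j) (γ : G.Profile) :
    G.omegaInfo i j γ = realizationWeight (γ i) (G.recordFrom i [] h) * G.SInfo i j γ := by
  rw [omegaInfo, SInfo, Finset.mul_sum]
  refine Finset.sum_congr rfl fun h' hh' => ?_
  rw [omega_eq_realizationWeight_mul_Sh i γ h', hPR i j hj h' hh' h hh]

lemma SelfIndep.isBayesAt (hμ : G.SelfIndep β μ) (hPR : G.PerfectRecall)
    (hγ : ∀ p, p ≠ i → γ p = β p) : IsBayesAt i γ μ := by
  intro j hj h hh
  have hS : G.SInfo i j γ = G.SInfo i j β := Finset.sum_congr rfl fun h _ => Sh_congr hγ h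
  rw [omega_eq_realizationWeight_mul_Sh i γ h, hPR.omegaInfo_eq hj hh γ, Sh_congr hγ, hS,
    ← hμ i j hj h hh, mul_assoc]

lemma IsBehProfile.exists_selfIndep (hβ : G.IsBehProfile β) :
    ∃ μ : G.Belief, G.IsBelief μ ∧ G.SelfIndep β μ := by
  have hex (i : Fin G.n) (j : ℕ) : ∃ p : List ℕ → ℝ, j < G.m i →
      ((∀ h ∈ G.Info i j, 0 ≤ p h) ∧ ∑ h ∈ G.Info i j, p h = 1) ∧
        ∀ h ∈ G.Info i j, G.SInfo i j β * p h = G.Sh i β h := by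
    by_cases hj : j < G.m i
    · obtain ⟨p, hp⟩ := exists_weights_sum_mul_eq (G.info_nonempty i j hj) fun h hh =>
        hβ.prodAlongNot_nonneg (i := i) (pre := []) (mem_H_of_mem_Info hj hh)
      exact ⟨p, fun _ => hp⟩
    · exact ⟨0, fun hj' => absurd hj' hj⟩
  choose μ hμ using hex
  exact ⟨μ, fun i j hj => (hμ i j hj).1, fun i j hj => (hμ i j hj).2⟩

end BayesRule

section ConditionalPayoffs

lemma PerfectRecall.nu_append_cons (hPR : G.PerfectRecall) (hj : j < G.m i)
    (hl : l ∈ G.Info i j) (γ : G.Profile) (μ : G.Belief) (a : ℕ) (r : List ℕ) :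
    G.nu i j γ μ (l ++ a :: r) = μ i j l * G.prodAlong γ (l ++ [a]) r := by
  suffices ∀ s pre, pre ++ s = l →
      G.nuAux i j γ (μ i j) pre (s ++ a :: r) = μ i j l * G.prodAlong γ (l ++ [a]) r from
    this l [] rfl
  intro s
  induction s with
  | nil =>
    rintro pre rfl
    rw [List.append_nil] at hl ⊢
    exact if_pos hl
  | cons b s ih =>
    rintro pre rfl
    have hpre : pre ∉ G.Info i j := fun hpre => hPR.append_cons_notMem_Info hj hpre hl
    rw [List.cons_append, nuAux, if_neg hpre]
    exact ih (pre ++ [b]) (by simp)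

lemma prodAlong_congr_of_follows (hj : j < G.m i) (ha : a ∈ G.infoA i j)
    (hne : ∀ p, p ≠ i → γ p = γ' p) (hf : ∀ q, Follows i j q → γ i q = γ' i q)
    (hpre : a ∈ pre) (hH : pre ++ r ∈ G.H) : G.prodAlong γ pre r = G.prodAlong γ' pre r := by
  induction r generalizing pre with
  | nil => rfl
  | cons b r ih =>
    have hb := append_singleton_mem_H hH
    rw [prodAlong, prodAlong, ih (List.mem_append_left _ hpre) (by simpa using hH)]
    congr 1
    refine moveProb_congr fun p hP => ?_
    by_cases hp : p = i
    · subst hp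
      exact hf _ ⟨hj, infoIdx_lt_of_P_eq hb hP, pre, mem_Info_infoIdx hb hP, a, hpre, ha⟩
    · rw [hne p hp]

lemma PerfectRecall.uCond_congr_of_follows (hPR : G.PerfectRecall) (hj : j < G.m i)
    (ha : a ∈ G.infoA i j) (hne : ∀ p, p ≠ i → γ p = γ' p)
    (hf : ∀ q, Follows i j q → γ i q = γ' i q) (μ : G.Belief) :
    G.uCond i j a γ μ = G.uCond i j a γ' μ := by
  refine Finset.sum_congr rfl fun z hz => ?_
  obtain ⟨hzZ, haz⟩ := Finset.mem_filter.1 hz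
  have hzH : z ∈ G.H := (Finset.mem_filter.1 hzZ).1
  obtain ⟨l, r, rfl⟩ := List.append_of_mem haz
  have hl : l ∈ G.Info i j := (mem_infoA_iff_mem_Info hj (append_singleton_mem_H hzH)).1 ha
  rw [hPR.nu_append_cons hj hl, hPR.nu_append_cons hj hl,
    prodAlong_congr_of_follows hj ha hne hf (by simp) (by simpa using hzH)]

lemma PerfectRecall.uCond_rho (hPR : G.PerfectRecall) (hj : j < G.m i)
    (ha : a ∈ G.infoA i j) (β βt : G.Profile) (μ : G.Belief) :
    G.uCond i j a (G.rho i j β βt) μ = G.uCond i j a (G.replace β i (βt i)) μ := by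
  refine hPR.uCond_congr_of_follows hj ha (fun p hp => ?_) (fun q hq => ?_) μ
  · rw [replace_apply_of_ne β _ hp]
    exact funext fun q => if_neg fun h => hp h.1
  · rw [replace_apply_self]
    exact if_pos ⟨rfl, hq.2.2⟩

end ConditionalPayoffs

section PayoffDifference

lemma PerfectRecall.omega_mul_prodAlong_sub (hPR : G.PerfectRecall)
    (hne : ∀ p, p ≠ i → γ' p = γ p) (hμ : IsBayesAt i γ' μ) (hH : pre ++ r ∈ G.H) :
    G.omega γ' pre * (G.prodAlong γ' pre r - G.prodAlong γ pre r) =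
      ((G.recordFrom i pre r).map fun p => (γ' i p.1 p.2 - γ i p.1 p.2) *
        (G.omegaInfo i p.1 γ' * G.nu i p.1 γ μ (pre ++ r))).sum := by
  induction r generalizing pre with
  | nil => simp [prodAlong, recordFrom]
  | cons b r ih =>
    have hb := append_singleton_mem_H hH
    have hassoc : pre ++ [b] ++ r = pre ++ b :: r := by simp
    have htail := ih (pre := pre ++ [b]) (hassoc ▸ hH)
    rw [hassoc, omega_append_singleton] at htail
    rw [prodAlong, prodAlong]
    by_cases hP : G.P pre = some i
    · have hlt := infoIdx_lt_of_P_eq hb hP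
      have hpre := mem_Info_infoIdx hb hP
      rw [recordFrom_cons_of_eq hP, List.map_cons, List.sum_cons, ← htail,
        hPR.nu_append_cons hlt hpre, ← mul_assoc (G.omegaInfo _ _ _), ← hμ _ hlt _ hpre,
        moveProb_of_P_eq γ hP, moveProb_of_P_eq γ' hP]
      ring
    · rw [recordFrom_cons_of_ne hP, ← htail, moveProb_congr_of_P_ne hne hP]
      ring

lemma PerfectRecall.omega_sub_omega (hPR : G.PerfectRecall)
    (hne : ∀ p, p ≠ i → γ' p = γ p) (hμ : IsBayesAt i γ' μ) (hH : h ∈ G.H) :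
    G.omega γ' h - G.omega γ h =
      ∑ j ∈ Finset.range (G.m i), ∑ a ∈ (G.infoA i j).filter (· ∈ h),
        (γ' i j a - γ i j a) * (G.omegaInfo i j γ' * G.nu i j γ μ h) := by
  rw [← hPR.sum_map_recordFrom i hH fun j a =>
    (γ' i j a - γ i j a) * (G.omegaInfo i j γ' * G.nu i j γ μ h)]
  exact (one_mul _).symm.trans (hPR.omega_mul_prodAlong_sub (pre := []) hne hμ hH)

theorem PerfectRecall.uExp_sub_uExp (hPR : G.PerfectRecall)
    (hne : ∀ p, p ≠ i → γ' p = γ p) (hμ : IsBayesAt i γ' μ) :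
    G.uExp i γ' - G.uExp i γ = ∑ j ∈ Finset.range (G.m i), G.omegaInfo i j γ' *
      ∑ a ∈ G.infoA i j, (γ' i j a - γ i j a) * G.uCond i j a γ μ := by
  have hpath : ∀ z ∈ G.Zset, G.u i z * G.omega γ' z - G.u i z * G.omega γ z =
      ∑ j ∈ Finset.range (G.m i), ∑ a ∈ G.infoA i j, if a ∈ z then
        G.omegaInfo i j γ' * ((γ' i j a - γ i j a) * (G.u i z * G.nu i j γ μ z)) else 0 := by
    intro z hz
    rw [← mul_sub, hPR.omega_sub_omega hne hμ (Finset.mem_filter.1 hz).1]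
    simp only [Finset.sum_filter, Finset.mul_sum, mul_ite, mul_zero]
    refine Finset.sum_congr rfl fun j _ => Finset.sum_congr rfl fun a _ => ?_
    congr 1
    ring
  rw [uExp, uExp, ← Finset.sum_sub_distrib, Finset.sum_congr rfl hpath, Finset.sum_comm]
  refine Finset.sum_congr rfl fun j _ => ?_
  rw [Finset.sum_comm, Finset.mul_sum]
  refine Finset.sum_congr rfl fun a _ => ?_
  rw [uCond, ← Finset.sum_filter, ← Finset.mul_sum, ← Finset.mul_sum]

end PayoffDifference

section SequentialRationality

/-- Player `i`'s strategy in `γ` is optimal at each of his information sets, given the beliefs `μ`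
and the play prescribed by `γ` afterwards. -/
def IsSeqRational (i : Fin G.n) (γ : G.Profile) (μ : G.Belief) : Prop :=
  ∀ j < G.m i, IsOptimalOn (G.infoA i j) (fun a => G.uCond i j a γ μ) (γ i j)

theorem PerfectRecall.exists_isSeqRational (hPR : G.PerfectRecall) (i : Fin G.n)
    (β : G.Profile) (μ : G.Belief) :
    ∃ b, G.IsBehStrategy i b ∧ IsSeqRational i (G.replace β i b) μ := by
  let OptimalChoice (j : ℕ) (b : ℕ → ℕ → ℝ) (x : ℕ → ℝ) : Prop :=
    j < G.m i → ((∀ a ∈ G.infoA i j, 0 ≤ x a) ∧ ∑ a ∈ G.infoA i j, x a = 1) ∧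
      IsOptimalOn (G.infoA i j) (fun a => G.uCond i j a (G.replace β i b) μ) x
  have hex : ∀ j b, ∃ x, OptimalChoice j b x := by
    intro j b
    by_cases hj : j < G.m i
    · obtain ⟨x, hx⟩ := exists_weights_isOptimalOn (infoA_nonempty hj)
        fun a => G.uCond i j a (G.replace β i b) μ
      exact ⟨x, fun _ => hx⟩
    · exact ⟨0, fun hj' => absurd hj' hj⟩
  have hloc : ∀ j b b' x, (∀ q, Follows i j q → b q = b' q) →
      OptimalChoice j b x → OptimalChoice j b' x := by
    intro j b b' x hbb' hx hj
    refine (hx hj).imp_right (isOptimalOn_congr fun a ha => ?_).1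
    refine hPR.uCond_congr_of_follows hj ha (fun p hp => ?_) (fun q hq => ?_) μ
    · rw [replace_apply_of_ne β b hp, replace_apply_of_ne β b' hp]
    · rw [replace_apply_self, replace_apply_self, hbb' q hq]
  obtain ⟨b, hb⟩ :=
    exists_forall_apply_of_wellFounded (hPR.wellFounded_flip_follows i) hex hloc
  refine ⟨b, fun j hj => (hb j hj).1, fun j hj => ?_⟩
  rw [replace_apply_self]
  exact (hb j hj).2

lemma IsSeqRational.sum_sub_mul_uCond_nonpos (hopt : IsSeqRational i γ μ)
    (hγ : G.IsBehProfile γ) (hγ' : G.IsBehProfile γ') (hj : j < G.m i) :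
    ∑ a ∈ G.infoA i j, (γ' i j a - γ i j a) * G.uCond i j a γ μ ≤ 0 := by
  have hs := infoA_nonempty hj
  simp only [sub_mul, Finset.sum_sub_distrib]
  rw [sub_nonpos, (sum_mul_eq_sup'_iff hs (hγ i j hj).1 (hγ i j hj).2).2 (hopt j hj)]
  exact sum_mul_le_sup' hs (hγ' i j hj).1 (hγ' i j hj).2

lemma IsSeqRational.sum_sub_mul_uCond_eq_zero_iff (hopt : IsSeqRational i γ μ)
    (hγ : G.IsBehProfile γ) (hγ' : G.IsBehProfile γ') (hj : j < G.m i) :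
    ∑ a ∈ G.infoA i j, (γ' i j a - γ i j a) * G.uCond i j a γ μ = 0 ↔
      IsOptimalOn (G.infoA i j) (fun a => G.uCond i j a γ μ) (γ' i j) := by
  have hs := infoA_nonempty hj
  simp only [sub_mul, Finset.sum_sub_distrib]
  rw [sub_eq_zero, (sum_mul_eq_sup'_iff hs (hγ i j hj).1 (hγ i j hj).2).2 (hopt j hj)]
  exact sum_mul_eq_sup'_iff hs (hγ' i j hj).1 (hγ' i j hj).2

theorem IsSeqRational.uExp_le (hopt : IsSeqRational i γ μ) (hPR : G.PerfectRecall)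
    (hγ : G.IsBehProfile γ) (hγ' : G.IsBehProfile γ') (hne : ∀ p, p ≠ i → γ' p = γ p)
    (hμ : IsBayesAt i γ' μ) : G.uExp i γ' ≤ G.uExp i γ := by
  rw [← sub_nonpos, hPR.uExp_sub_uExp hne hμ]
  exact Finset.sum_nonpos fun j hj => mul_nonpos_of_nonneg_of_nonpos
    (hγ'.omegaInfo_nonneg (Finset.mem_range.1 hj))
    (hopt.sum_sub_mul_uCond_nonpos hγ hγ' (Finset.mem_range.1 hj))

theorem IsSeqRational.uExp_le_iff (hopt : IsSeqRational i γ μ) (hPR : G.PerfectRecall)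
    (hγ : G.IsBehProfile γ) (hγ' : G.IsBehProfile γ') (hne : ∀ p, p ≠ i → γ' p = γ p)
    (hμ : IsBayesAt i γ' μ) :
    G.uExp i γ ≤ G.uExp i γ' ↔ ∀ j < G.m i, 0 < G.omegaInfo i j γ' →
      IsOptimalOn (G.infoA i j) (fun a => G.uCond i j a γ μ) (γ' i j) := by
  have hterm : ∀ j ∈ Finset.range (G.m i), G.omegaInfo i j γ' *
      ∑ a ∈ G.infoA i j, (γ' i j a - γ i j a) * G.uCond i j a γ μ ≤ 0 := fun j hj =>
    mul_nonpos_of_nonneg_of_nonpos (hγ'.omegaInfo_nonneg (Finset.mem_range.1 hj))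
      (hopt.sum_sub_mul_uCond_nonpos hγ hγ' (Finset.mem_range.1 hj))
  rw [(hopt.uExp_le hPR hγ hγ' hne hμ).ge_iff_eq, ← sub_eq_zero, hPR.uExp_sub_uExp hne hμ,
    Finset.sum_eq_zero_iff_of_nonpos hterm]
  simp only [Finset.mem_range]
  refine forall₂_congr fun j hj => ?_
  rw [mul_eq_zero, hopt.sum_sub_mul_uCond_eq_zero_iff hγ hγ' hj,
    (hγ'.omegaInfo_nonneg hj).lt_iff_ne, ne_comm, or_iff_not_imp_left]

theorem isNash_iff_of_isSeqRational (hPR : G.PerfectRecall) (hβ : G.IsBehProfile β)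
    {βt : G.Profile} (hβt : G.IsBehProfile βt) (hμ : G.SelfIndep β μ)
    (hopt : ∀ i, IsSeqRational i (G.replace β i (βt i)) μ) :
    G.IsNash β ↔ ∀ i, ∀ j < G.m i, 0 < G.omegaInfo i j β →
      IsOptimalOn (G.infoA i j) (fun a => G.uCond i j a (G.replace β i (βt i)) μ) (β i j) := by
  have hrep i : G.IsBehProfile (G.replace β i (βt i)) := hβ.replace (hβt i)
  have hbest i (b) (hb : G.IsBehStrategy i b) :
      G.uExp i (G.replace β i b) ≤ G.uExp i (G.replace β i (βt i)) :=
    (hopt i).uExp_le hPR (hrep i) (hβ.replace hb)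
      (fun p hp => by rw [replace_apply_of_ne β _ hp, replace_apply_of_ne β _ hp])
      (hμ.isBayesAt hPR fun p hp => replace_apply_of_ne β _ hp)
  have hattain i := (hopt i).uExp_le_iff hPR (hrep i) hβ
    (fun p hp => (replace_apply_of_ne β _ hp).symm) (hμ.isBayesAt hPR fun _ _ => rfl)
  simp only [← hattain]
  exact ⟨fun hN i => hN.2 i (βt i) (hβt i),
    fun hle => ⟨hβ, fun i b hb => (hbest i b hb).trans (hle i)⟩⟩

lemma PerfectRecall.isOptimalOn_uCond_rho_iff (hPR : G.PerfectRecall) (hj : j < G.m i)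
    {βt : G.Profile} {p : ℕ → ℝ} :
    IsOptimalOn (G.infoA i j) (fun a => G.uCond i j a (G.rho i j β βt) μ) p ↔
      IsOptimalOn (G.infoA i j) (fun a => G.uCond i j a (G.replace β i (βt i)) μ) p :=
  isOptimalOn_congr fun _ ha => hPR.uCond_rho hj ha β βt μ

lemma PerfectRecall.isSeqRational_replace_iff_rho (hPR : G.PerfectRecall) {βt : G.Profile} :
    IsSeqRational i (G.replace β i (βt i)) μ ↔ ∀ j < G.m i,
      IsOptimalOn (G.infoA i j) (fun a => G.uCond i j a (G.rho i j β βt) μ) (βt i j) := by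
  rw [IsSeqRational, replace_apply_self]
  exact forall₂_congr fun j hj => (hPR.isOptimalOn_uCond_rho_iff hj).symm

end SequentialRationality

end EFG

/-- Definition 3 (equivalent definition of Nash equilibrium under conditional expected
payoffs): `β*` is a Nash equilibrium in behavioral strategies iff there exist `β̃*` and a
self-independent belief system `μ*` satisfying local sequential rationality, where the
condition on `β*` is imposed only at information sets reached with positive probability. -/
theorem stmt8 (G : EFG) (hPR : G.PerfectRecall) (β : G.Profile) (hβ : G.IsBehProfile β) :
    G.IsNash β ↔
      ∃ (βt : G.Profile) (μ : G.Belief), G.IsBehProfile βt ∧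
        (∀ (i : Fin G.n) (j : ℕ), j < G.m i → ∀ a' ∈ G.infoA i j, ∀ a'' ∈ G.infoA i j,
          0 < G.omegaInfo i j β →
          G.uCond i j a' (G.rho i j β βt) μ < G.uCond i j a'' (G.rho i j β βt) μ →
          β i j a' = 0) ∧
        (∀ (i : Fin G.n) (j : ℕ), j < G.m i → ∀ a' ∈ G.infoA i j, ∀ a'' ∈ G.infoA i j,
          G.uCond i j a' (G.rho i j β βt) μ < G.uCond i j a'' (G.rho i j β βt) μ →
          βt i j a' = 0) ∧
        G.IsBelief μ ∧ G.SelfIndep β μ := by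
  constructor
  · intro hN
    obtain ⟨μ, hbel, hμ⟩ := hβ.exists_selfIndep
    choose βt hβt hopt using fun i => hPR.exists_isSeqRational i β μ
    have hon := (EFG.isNash_iff_of_isSeqRational hPR hβ hβt hμ hopt).1 hN
    refine ⟨βt, μ, hβt, fun i j hj a' ha' a'' ha'' hpos => ?_,
      fun i => hPR.isSeqRational_replace_iff_rho.1 (hopt i), hbel, hμ⟩
    exact (hPR.isOptimalOn_uCond_rho_iff hj).2 (hon i j hj hpos) a' ha' a'' ha''
  · rintro ⟨βt, μ, hβt, hon, hoff, -, hμ⟩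
    have hopt (i : Fin G.n) : EFG.IsSeqRational i (G.replace β i (βt i)) μ :=
      hPR.isSeqRational_replace_iff_rho.2 (hoff i)
    refine (EFG.isNash_iff_of_isSeqRational hPR hβ hβt hμ hopt).2 fun i j hj hpos => ?_
    exact (hPR.isOptimalOn_uCond_rho_iff hj).1 fun a' ha' a'' ha'' =>
      hon i j hj a' ha' a'' ha'' hpos
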